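/- Clifford invariance of the stabilizer Rényi quantity: let n be a natural number, α ≥ 1 an integer, and C a unitary matrix indexed by (Fin n → Fin 2) (C ∈ Matrix.unitaryGroup) such that for every s : Fin n → Fin 4 there exist t : Fin n → Fin 4 and c ∈ ({1, -1, Complex.I, -Complex.I} : Set ℂ) with C * P_s * Cᴴ = c • P_t. Then for every unit vector ψ : (Fin n → Fin 2) → ℂ, A_α(C.mulVec ψ) = A_α(ψ). -/

import Mathlib

open Complex Matrix BigOperators

/-- The single-qubit Pauli matrices `Q₀ = 1`, `Q₁ = X`, `Q₂ = Y`, `Q₃ = Z`. -/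
noncomputable def Q : Fin 4 → Matrix (Fin 2) (Fin 2) ℂ :=
  ![1, !![0, 1; 1, 0], !![0, -Complex.I; Complex.I, 0], !![1, 0; 0, -1]]

/-- The `n`-qubit Pauli string `P_s`, the Kronecker product of the `Q (s k)`. -/
noncomputable def P {n : ℕ} (s : Fin n → Fin 4) :
    Matrix (Fin n → Fin 2) (Fin n → Fin 2) ℂ :=
  Matrix.of fun i j => ∏ k, Q (s k) (i k) (j k)


/-- `A_α(ψ) = d⁻¹ ∑_s ⟨ψ, P_s ψ⟩^(2α)` with `d = 2^n`. -/
noncomputable def A (n α : ℕ) (ψ : (Fin n → Fin 2) → ℂ) : ℝ :=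
  (2 ^ n : ℝ)⁻¹ * ∑ s : Fin n → Fin 4, (star ψ ⬝ᵥ (P s).mulVec ψ).re ^ (2 * α)

lemma Q_herm (a : Fin 4) (i j : Fin 2) : star (Q a i j) = Q a j i := by
  fin_cases a <;> fin_cases i <;> fin_cases j <;> simp [Q]

lemma Q_trace (a b : Fin 4) :
    ∑ i : Fin 2, ∑ j : Fin 2, Q a i j * Q b j i = if a = b then 2 else 0 := by
  fin_cases a <;> fin_cases b <;> simp [Q, Fin.sum_univ_two] <;> norm_num

lemma P_herm {n : ℕ} (s : Fin n → Fin 4) : (P s)ᴴ = P s := by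
  ext i j
  simp only [P, Matrix.conjTranspose_apply, Matrix.of_apply, star_prod, Q_herm]

lemma P_trace {n : ℕ} (s t : Fin n → Fin 4) :
    (P s * P t).trace = ∏ k, (if s k = t k then (2 : ℂ) else 0) := by
  simp only [← Q_trace, Matrix.trace, Matrix.diag, Matrix.mul_apply, P, Matrix.of_apply,
    ← Finset.prod_mul_distrib]
  simp only [Finset.prod_univ_sum, Fintype.piFinset_univ]

lemma P_exp_real {n : ℕ} (s : Fin n → Fin 4) (ψ : (Fin n → Fin 2) → ℂ) :
    (star ψ ⬝ᵥ (P s).mulVec ψ).im = 0 := by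
  have h : star (star ψ ⬝ᵥ (P s).mulVec ψ) = star ψ ⬝ᵥ (P s).mulVec ψ := by
    rw [← Matrix.star_dotProduct, Matrix.star_mulVec, P_herm, Matrix.dotProduct_mulVec]
  exact Complex.conj_eq_iff_im.mp h

theorem clifford_invariance (n α : ℕ) (hα : 1 ≤ α)
    (C : Matrix.unitaryGroup (Fin n → Fin 2) ℂ)
    (hC : ∀ s : Fin n → Fin 4, ∃ t : Fin n → Fin 4,
      ∃ c ∈ ({1, -1, Complex.I, -Complex.I} : Set ℂ),
        (C : Matrix (Fin n → Fin 2) (Fin n → Fin 2) ℂ) * P s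
            * (C : Matrix (Fin n → Fin 2) (Fin n → Fin 2) ℂ)ᴴ = c • P t)
    (ψ : (Fin n → Fin 2) → ℂ) (hψ : star ψ ⬝ᵥ ψ = 1) :
    A n α ((C : Matrix (Fin n → Fin 2) (Fin n → Fin 2) ℂ).mulVec ψ) = A n α ψ := by
  classical
  choose t c hc h using hC
  set U : Matrix (Fin n → Fin 2) (Fin n → Fin 2) ℂ := C.1 with hU
  have hUU : Uᴴ * U = 1 := Matrix.mem_unitaryGroup_iff'.mp C.2
  have hc0 : ∀ s, c s ≠ 0 := by
    intro s
    rcases hc s with h | h | h | h <;> rw [h] <;> simp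
  have hinj : Function.Injective t := by
    intro s s' hst
    by_contra hne
    have h0 : (P s * P s').trace = 0 := by
      rw [P_trace]
      obtain ⟨k, hk⟩ := Function.ne_iff.mp hne
      exact Finset.prod_eq_zero (Finset.mem_univ k) (if_neg hk)
    have h1 : ((U * P s * Uᴴ) * (U * P s' * Uᴴ)).trace = (P s * P s').trace := by
      have e : (U * P s * Uᴴ) * (U * P s' * Uᴴ) = U * (P s * P s') * Uᴴ := by
        calc _ = U * P s * (Uᴴ * U) * P s' * Uᴴ := by simp only [Matrix.mul_assoc]
          _ = _ := by rw [hUU]; simp only [Matrix.mul_assoc, Matrix.one_mul]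
      rw [e, Matrix.trace_mul_comm, ← Matrix.mul_assoc, hUU, Matrix.one_mul]
    rw [h, h, h0, hst, Matrix.smul_mul, Matrix.mul_smul, Matrix.trace_smul,
      Matrix.trace_smul, P_trace] at h1
    simp [hc0] at h1
  have hbij : Function.Bijective t := Finite.injective_iff_bijective.mp hinj
  have key : ∀ s, (star ψ ⬝ᵥ (P s).mulVec ψ)
      = c s * (star (U.mulVec ψ) ⬝ᵥ (P (t s)).mulVec (U.mulVec ψ)) := by
    intro s
    have e : P s = Uᴴ * (c s • P (t s)) * U := by
      rw [← h]
      calc P s = (Uᴴ * U) * P s * (Uᴴ * U) := by rw [hUU]; simp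
        _ = _ := by simp only [Matrix.mul_assoc]
    rw [e, Matrix.star_mulVec, ← Matrix.dotProduct_mulVec, Matrix.mulVec_mulVec,
      Matrix.mulVec_mulVec, Matrix.mul_smul, Matrix.smul_mul,
      Matrix.smul_mulVec, dotProduct_smul, smul_eq_mul]
  unfold A
  congr 1
  symm
  refine Fintype.sum_bijective t hbij _ _ fun s => ?_
  have hx := P_exp_real s ψ
  have hy := P_exp_real (t s) (U.mulVec ψ)
  have hk := key s
  generalize (star ψ ⬝ᵥ (P s).mulVec ψ) = x at *
  generalize (star (U.mulVec ψ) ⬝ᵥ (P (t s)).mulVec (U.mulVec ψ)) = y at *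
  rw [pow_mul, pow_mul]
  congr 1
  rw [hk] at hx ⊢
  rcases hc s with h | h | h | h <;> rw [h] at hx ⊢ <;> simp at hx ⊢ <;> simp [hx, hy]
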